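/- (Witt decomposition, uniqueness) Let F be a field of characteristic not equal to 2 and let (V, q) be a non-degenerate quadratic space over F. Suppose V ≅ H₁ ⊥ ⋯ ⊥ H_k ⊥ V_a and V ≅ H₁′ ⊥ ⋯ ⊥ H_m′ ⊥ V_a′ are two decompositions in which all Hᵢ and Hⱼ′ are hyperbolic planes and V_a, V_a′ are anisotropic. Then k = m and V_a is isometric to V_a′. -/

import Mathlib

/-!
Witt's cancellation theorem gives uniqueness. Two vectors `u`, `v` of the same invertible length are
exchanged, up to sign, by the reflection in `u - v` or in `u + v`: since
`Q (u - v) + Q (u + v) = 4 Q u`, one of the two is invertible over a local ring with `2` invertible.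
An isometry `⟨a⟩ ⊥ Q₁ ≅ ⟨a⟩ ⊥ Q₂` can therefore be corrected to fix `⟨a⟩`, and it then restricts to
the orthogonal complements. Cancelling hyperbolic planes one at a time leaves an anisotropic space
on one side, so no hyperbolic plane can remain on the other, as it would contain an isotropic vector.
-/

namespace WittDecomposition

open QuadraticMap

section OrthogonalSum

variable {R M₁ M₂ M₃ N : Type*} [CommSemiring R]
  [AddCommMonoid M₁] [AddCommMonoid M₂] [AddCommMonoid M₃] [AddCommMonoid N]
  [Module R M₁] [Module R M₂] [Module R M₃] [Module R N]

theorem prod_assoc_equivalent (Q₁ : QuadraticMap R M₁ N) (Q₂ : QuadraticMap R M₂ N)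
    (Q₃ : QuadraticMap R M₃ N) :
    ((Q₁.prod Q₂).prod Q₃).Equivalent (Q₁.prod (Q₂.prod Q₃)) :=
  ⟨{ LinearEquiv.prodAssoc R M₁ M₂ M₃ with map_app' := fun _ => (add_assoc _ _ _).symm }⟩

theorem prod_equivalent_right_of_unique [Unique M₁] (Q₁ : QuadraticMap R M₁ N)
    (Q₂ : QuadraticMap R M₂ N) : (Q₁.prod Q₂).Equivalent Q₂ :=
  ⟨{ LinearEquiv.uniqueProd with
      map_app' := fun ⟨x, y⟩ => by
        rw [prod_apply, Subsingleton.elim x 0, QuadraticMap.map_zero, zero_add]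
        rfl }⟩

theorem pi_fin_succ_equivalent_prod {n : ℕ} {M : Fin (n + 1) → Type*}
    [∀ i, AddCommMonoid (M i)] [∀ i, Module R (M i)] (Q : ∀ i, QuadraticMap R (M i) N) :
    (pi Q).Equivalent ((Q 0).prod (pi fun i : Fin n => Q i.succ)) :=
  Equivalent.symm
    ⟨{ Fin.consLinearEquiv R M with map_app' := fun _ => by simp [Fin.sum_univ_succ] }⟩

theorem pi_fin_succ_prod_equivalent {n : ℕ} {M : Fin (n + 1) → Type*}
    [∀ i, AddCommMonoid (M i)] [∀ i, Module R (M i)] (Q : ∀ i, QuadraticMap R (M i) N)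
    (Q' : QuadraticMap R M₁ N) :
    ((pi Q).prod Q').Equivalent ((Q 0).prod ((pi fun i : Fin n => Q i.succ).prod Q')) :=
  ((pi_fin_succ_equivalent_prod Q).prod (.refl Q')).trans (prod_assoc_equivalent _ _ _)

theorem weightedSumSquares_eq_pi {ι : Type*} [Fintype ι] (w : ι → R) :
    weightedSumSquares R w = pi fun i => w i • (sq : QuadraticForm R R) := by
  ext x
  simp

theorem anisotropic_of_equivalent {Q₁ : QuadraticMap R M₁ N} {Q₂ : QuadraticMap R M₂ N}
    (h : Q₁.Equivalent Q₂) (h₁ : Q₁.Anisotropic) : Q₂.Anisotropic := by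
  obtain ⟨e⟩ := h
  intro y hy
  have : e.symm y = 0 := h₁ _ ((e.symm.map_app y).trans hy)
  rw [e.symm_apply_eq.mp this, map_zero]

end OrthogonalSum

section Reflection

variable {R M : Type*} [CommRing R] [AddCommGroup M] [Module R M]

theorem inv_smul_polarBilin_self (Q : QuadraticForm R M) {x : M} (hx : IsUnit (Q x)) :
    (hx.unit⁻¹ • Q.polarBilin x) x = 2 := by
  simp only [LinearMap.smul_apply, polarBilin_apply_apply, polar_self, Units.smul_def,
    nsmul_eq_mul, smul_eq_mul, Nat.cast_ofNat]
  rw [mul_left_comm, hx.val_inv_mul, mul_one]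

/-- The reflection `y ↦ y - (polar Q x y / Q x) • x` in the hyperplane orthogonal to a vector `x`
of invertible length, as an isometry. -/
noncomputable def reflection (Q : QuadraticForm R M) {x : M} (hx : IsUnit (Q x)) :
    Q.IsometryEquiv Q where
  toLinearEquiv := Module.reflection (inv_smul_polarBilin_self Q hx)
  map_app' y := by
    set c : R := (hx.unit⁻¹ • Q.polarBilin x) y with hc
    have hcx : c * Q x = polar Q x y := by
      simp only [hc, LinearMap.smul_apply, polarBilin_apply_apply, Units.smul_def, smul_eq_mul]
      rw [mul_right_comm, hx.val_inv_mul, one_mul]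
    calc Q (Module.reflection (inv_smul_polarBilin_self Q hx) y)
        = Q (y + -c • x) := by rw [Module.reflection_apply, neg_smul, sub_eq_add_neg]
      _ = Q y + c * (c * Q x - polar Q x y) := by
        rw [QuadraticMap.map_add Q, QuadraticMap.map_smul, polar_smul_right, polar_comm Q y x]
        simp only [smul_eq_mul]
        ring
      _ = Q y := by rw [hcx, sub_self, mul_zero, add_zero]

theorem reflection_apply_of_polar_eq (Q : QuadraticForm R M) {x y : M} (hx : IsUnit (Q x))
    (h : polar Q x y = Q x) : reflection Q hx y = y - x := by
  have hcoeff : (hx.unit⁻¹ • Q.polarBilin x) y = 1 := by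
    rw [LinearMap.smul_apply, polarBilin_apply_apply, h, Units.smul_def, smul_eq_mul,
      hx.val_inv_mul]
  calc reflection Q hx y = y - (hx.unit⁻¹ • Q.polarBilin x) y • x :=
        Module.reflection_apply y (inv_smul_polarBilin_self Q hx)
    _ = y - x := by rw [hcoeff, one_smul]

/-- The isometry `x ↦ -x`, which corrects the sign of a reflected vector. -/
def negIsometryEquiv (Q : QuadraticForm R M) : Q.IsometryEquiv Q where
  toLinearEquiv := LinearEquiv.neg R
  map_app' := Q.map_neg

theorem exists_isometryEquiv_apply_eq [IsLocalRing R] (h2 : IsUnit (2 : R))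
    (Q : QuadraticForm R M) {u v : M} (huv : Q u = Q v) (hu : IsUnit (Q u)) :
    ∃ τ : Q.IsometryEquiv Q, τ u = v := by
  have map_sub_eq : Q (u - v) = 2 * Q u - polar Q u v := by
    rw [sub_eq_add_neg, QuadraticMap.map_add Q, QuadraticMap.map_neg, polar_neg_right, ← huv]
    ring
  have map_add_eq : Q (u + v) = 2 * Q u + polar Q u v := by
    rw [QuadraticMap.map_add Q, ← huv]
    ring
  have parallelogram : Q (u - v) + Q (u + v) = 2 * 2 * Q u := by
    rw [map_sub_eq, map_add_eq]
    ring
  have isUnit_sum : IsUnit (Q (u - v) + Q (u + v)) := parallelogram ▸ (h2.mul h2).mul hu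
  rcases IsLocalRing.isUnit_or_isUnit_of_isUnit_add isUnit_sum with hsub | hadd
  · have hpolar : polar Q (u - v) u = Q (u - v) := by
      rw [map_sub_eq, polar_sub_left, polar_self, polar_comm Q v u, two_nsmul, two_mul]
    exact ⟨reflection Q hsub, by rw [reflection_apply_of_polar_eq Q hsub hpolar, sub_sub_cancel]⟩
  · have hpolar : polar Q (u + v) u = Q (u + v) := by
      rw [map_add_eq, polar_add_left, polar_self, polar_comm Q v u, two_nsmul, two_mul]
    refine ⟨(reflection Q hadd).trans (negIsometryEquiv Q), ?_⟩
    calc -(reflection Q hadd u) = -(u - (u + v)) := by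
          rw [reflection_apply_of_polar_eq Q hadd hpolar]
      _ = v := by abel

end Reflection

section Cancellation

variable {R M M₁ M₂ N : Type*} [CommRing R] [AddCommGroup M] [AddCommGroup M₁] [AddCommGroup M₂]
  [AddCommGroup N] [Module R M] [Module R M₁] [Module R M₂] [Module R N]

theorem polar_isometry_apply {Q₁ : QuadraticMap R M₁ N} {Q₂ : QuadraticMap R M₂ N}
    (f : Q₁ →qᵢ Q₂) (x y : M₁) : polar Q₂ (f x) (f y) = polar Q₁ x y := by
  simp only [polar, ← map_add, f.map_app]

theorem isometry_apply_inr_fst_eq_zero {Q : QuadraticMap R M N}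
    {Q₁ : QuadraticMap R M₁ N} {Q₂ : QuadraticMap R M₂ N}
    (hQ : Q.polarBilin.SeparatingRight) (f : Q.prod Q₁ →qᵢ Q.prod Q₂)
    (hf : ∀ x, f (x, 0) = (x, 0)) (y : M₁) : (f (0, y)).1 = 0 := by
  refine hQ _ fun x => ?_
  calc polar Q x (f (0, y)).1 = polar (Q.prod Q₂) (x, 0) (f (0, y)) := by simp
    _ = polar (Q.prod Q₂) (f (x, 0)) (f (0, y)) := by rw [hf]
    _ = polar (Q.prod Q₁) (x, 0) (0, y) := polar_isometry_apply f _ _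
    _ = 0 := by simp

theorem equivalent_of_isometryEquiv_prod_fixing_left {Q : QuadraticMap R M N}
    {Q₁ : QuadraticMap R M₁ N} {Q₂ : QuadraticMap R M₂ N}
    (hQ : Q.polarBilin.SeparatingRight) (e : (Q.prod Q₁).IsometryEquiv (Q.prod Q₂))
    (he : ∀ x, e (x, 0) = (x, 0)) : Q₁.Equivalent Q₂ := by
  have he_symm (x : M) : e.symm (x, 0) = (x, 0) := e.symm_apply_eq.mpr (he x).symm
  have apply_inr (y : M₁) : e (0, y) = (0, (e (0, y)).2) :=
    Prod.ext (isometry_apply_inr_fst_eq_zero hQ e.toIsometry he y) rfl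
  have symm_apply_inr (z : M₂) : e.symm (0, z) = (0, (e.symm (0, z)).2) :=
    Prod.ext (isometry_apply_inr_fst_eq_zero hQ e.symm.toIsometry he_symm z) rfl
  refine ⟨⟨LinearEquiv.ofLinearMap
    (LinearMap.snd R M M₂ ∘ₗ e.toLinearEquiv.toLinearMap ∘ₗ LinearMap.inr R M M₁)
    (LinearMap.snd R M M₁ ∘ₗ e.symm.toLinearEquiv.toLinearMap ∘ₗ LinearMap.inr R M M₂)
    (LinearMap.ext fun z => ?_) (LinearMap.ext fun y => ?_), fun y => ?_⟩⟩
  · change (e (0, (e.symm (0, z)).2)).2 = z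
    rw [← symm_apply_inr, e.apply_symm_apply]
  · change (e.symm (0, (e (0, y)).2)).2 = y
    rw [← apply_inr, e.symm_apply_apply]
  · calc Q₂ (e (0, y)).2 = Q.prod Q₂ (0, (e (0, y)).2) := by simp
      _ = Q.prod Q₁ (0, y) := by rw [← apply_inr, e.map_app]
      _ = Q₁ y := by simp

theorem separatingRight_polarBilin_smul_sq (h2 : IsUnit (2 : R)) {a : R} (ha : IsUnit a) :
    (a • (sq : QuadraticForm R R)).polarBilin.SeparatingRight := by
  intro y hy
  have : 2 * a * y = 0 := by
    calc 2 * a * y = polar (a • (sq : QuadraticForm R R)) 1 y := by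
          simp only [polar, _root_.smul_apply, sq_apply, smul_eq_mul]
          ring
      _ = 0 := hy 1
  exact (h2.mul ha).mul_right_eq_zero.mp this

variable [IsLocalRing R] {Q₁ : QuadraticForm R M₁} {Q₂ : QuadraticForm R M₂}

theorem equivalent_of_smul_sq_prod_equivalent (h2 : IsUnit (2 : R)) {a : R} (ha : IsUnit a)
    (h : ((a • (sq : QuadraticForm R R)).prod Q₁).Equivalent
      ((a • (sq : QuadraticForm R R)).prod Q₂)) : Q₁.Equivalent Q₂ := by
  obtain ⟨e⟩ := h
  have length_one : (a • (sq : QuadraticForm R R)).prod Q₂ (1, 0) = a := by simp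
  have length_image : (a • (sq : QuadraticForm R R)).prod Q₂ (e (1, 0)) = a := by
    rw [e.map_app]
    simp
  obtain ⟨τ, hτ⟩ := exists_isometryEquiv_apply_eq h2 _ (length_image.trans length_one.symm)
    (length_image.symm ▸ ha)
  refine equivalent_of_isometryEquiv_prod_fixing_left
    (separatingRight_polarBilin_smul_sq h2 ha) (e.trans τ) fun x => ?_
  calc (e.trans τ) (x, 0) = (e.trans τ) (x • (1, 0)) := by simp
    _ = x • τ (e (1, 0)) := map_smul (e.trans τ) x (1, 0)
    _ = (x, 0) := by simp [hτ]

theorem equivalent_of_weightedSumSquares_prod_equivalent (h2 : IsUnit (2 : R)) {n : ℕ}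
    {w : Fin n → R} (hw : ∀ i, IsUnit (w i))
    (h : ((weightedSumSquares R w).prod Q₁).Equivalent ((weightedSumSquares R w).prod Q₂)) :
    Q₁.Equivalent Q₂ := by
  rw [weightedSumSquares_eq_pi] at h
  induction n with
  | zero =>
    exact ((prod_equivalent_right_of_unique _ Q₁).symm.trans h).trans
      (prod_equivalent_right_of_unique _ Q₂)
  | succ n ih =>
    refine ih (fun i => hw i.succ) (equivalent_of_smul_sq_prod_equivalent h2 (hw 0) ?_)
    exact ((pi_fin_succ_prod_equivalent _ Q₁).symm.trans h).trans (pi_fin_succ_prod_equivalent _ Q₂)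

end Cancellation

section Hyperbolic

variable {R M : Type*} [CommRing R] [AddCommGroup M] [Module R M]

variable (R) in
/-- The hyperbolic plane `⟨1, -1⟩`, encoded as the diagonal form `x₀² - x₁²`. -/
abbrev hyperbolicPlane : QuadraticForm R (Fin 2 → R) :=
  weightedSumSquares R (![1, -1] : Fin 2 → R)

theorem not_anisotropic_hyperbolicPlane [Nontrivial R] : ¬(hyperbolicPlane R).Anisotropic :=
  fun h => one_ne_zero (congrFun (h ![1, 1] (by simp)) 0)

theorem eq_zero_of_anisotropic_pi_hyperbolicPlane_prod [Nontrivial R] {k : ℕ}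
    {q : QuadraticForm R M}
    (h : ((pi fun _ : Fin k => hyperbolicPlane R).prod q).Anisotropic) : k = 0 := by
  by_contra hk
  exact not_anisotropic_hyperbolicPlane
    (anisotropic_of_pi (anisotropic_of_prod h).1 ⟨0, Nat.pos_of_ne_zero hk⟩)

end Hyperbolic

end WittDecomposition

open WittDecomposition in
theorem witt_decomposition_unique_general {R M₁ M₂ : Type*} [CommRing R] [IsLocalRing R]
    [AddCommGroup M₁] [Module R M₁] [AddCommGroup M₂] [Module R M₂] (h2 : IsUnit (2 : R))
    {q₁ : QuadraticForm R M₁} {q₂ : QuadraticForm R M₂}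
    (hq₁ : q₁.Anisotropic) (hq₂ : q₂.Anisotropic) {k m : ℕ}
    (h : ((QuadraticMap.pi fun _ : Fin k => hyperbolicPlane R).prod q₁).Equivalent
      ((QuadraticMap.pi fun _ : Fin m => hyperbolicPlane R).prod q₂)) :
    k = m ∧ q₁.Equivalent q₂ := by
  induction k generalizing m with
  | zero =>
    have h' := (prod_equivalent_right_of_unique _ q₁).symm.trans h
    obtain rfl := eq_zero_of_anisotropic_pi_hyperbolicPlane_prod (anisotropic_of_equivalent h' hq₁)
    exact ⟨rfl, h'.trans (prod_equivalent_right_of_unique _ q₂)⟩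
  | succ k ih =>
    cases m with
    | zero =>
      have h' := (prod_equivalent_right_of_unique _ q₂).symm.trans h.symm
      exact absurd (eq_zero_of_anisotropic_pi_hyperbolicPlane_prod
        (anisotropic_of_equivalent h' hq₂)) k.succ_ne_zero
    | succ m =>
      have weights_isUnit : ∀ i, IsUnit ((![1, -1] : Fin 2 → R) i) := by
        simp [Fin.forall_fin_two]
      have cancelled := equivalent_of_weightedSumSquares_prod_equivalent h2 weights_isUnit
        (((pi_fin_succ_prod_equivalent _ q₁).symm.trans h).trans
          (pi_fin_succ_prod_equivalent _ q₂))
      exact (ih cancelled).imp_left (congrArg (· + 1))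

/-- Witt decomposition, uniqueness: if a non-degenerate quadratic space `(V, q)` is
isometric both to `H^{⊥k} ⊥ V_a` and to `H^{⊥m} ⊥ V_a′` with `V_a`, `V_a′` anisotropic
(`H` the hyperbolic plane `⟨1, −1⟩`), then `k = m` and `V_a ≅ V_a′`. -/
theorem witt_decomposition_unique {F V Va Va' : Type*} [Field F]
    [AddCommGroup V] [Module F V] [FiniteDimensional F V]
    [AddCommGroup Va] [Module F Va] [FiniteDimensional F Va]
    [AddCommGroup Va'] [Module F Va'] [FiniteDimensional F Va']
    (hF : (2 : F) ≠ 0)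
    (Q : QuadraticForm F V)
    (hQ : ∀ v : V, (∀ w : V, QuadraticMap.polar Q v w / 2 = 0) → v = 0)
    {k m : ℕ} (qa : QuadraticForm F Va) (qa' : QuadraticForm F Va')
    (hqa : qa.Anisotropic) (hqa' : qa'.Anisotropic)
    (h₁ : QuadraticMap.Equivalent Q
      ((QuadraticMap.pi fun _ : Fin k =>
        QuadraticMap.weightedSumSquares F (![1, -1] : Fin 2 → F)).prod qa))
    (h₂ : QuadraticMap.Equivalent Q
      ((QuadraticMap.pi fun _ : Fin m =>
        QuadraticMap.weightedSumSquares F (![1, -1] : Fin 2 → F)).prod qa')) :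
    k = m ∧ QuadraticMap.Equivalent qa qa' :=
  witt_decomposition_unique_general hF.isUnit hqa hqa' (h₁.symm.trans h₂)
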